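/- The translation (·)† from the λμ-calculus to the λ̄μμ̃-calculus preserves simple typing: if Γ ⊢ t : A | Δ is derivable in the λμ type system, then Γ ⊢ t† : A | Δ is derivable in the λ̄μμ̃ type system (and analogously, λμ-command judgments c : (Γ ⊢ Δ) and λμ-context judgments Γ | e : A ⊢ Δ are mapped to derivable λ̄μμ̃ judgments c† : (Γ ⊢ Δ) and Γ | e† : A ⊢ Δ). -/

import Mathlib

set_option autoImplicit true

namespace CHTyping

/-- Simple types `T ::= X | T → T`. -/
inductive Ty : Type
  | base : ℕ → Ty
  | arr : Ty → Ty → Ty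

/-- Typing environments: finite-domain assignments of simple types to
(named) variables, represented as partial functions. -/
abbrev Cx : Type := ℕ → Option Ty

/-- The empty environment. -/
def emp : Cx := fun _ => none

/-- The one-point environment `x : A`. -/
def single (x : ℕ) (A : Ty) : Cx := fun y => if y = x then some A else none

/-- Union `Γ, Γ'` of two environments (asserted compatible). -/
def union (Γ Γ' : Cx) : Cx := fun x => (Γ x).orElse (fun _ => Γ' x)

/-- Two environments match each other on the intersection of their domains. -/
def Compat (Γ Γ' : Cx) : Prop := ∀ x A B, Γ x = some A → Γ' x = some B → A = B

/-- `Γ ∖ {x : A}`: removal of a variable from an environment. -/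
def remove (Γ : Cx) (x : ℕ) : Cx := fun y => if y = x then none else Γ y

/-- `Γ, x : A`: extension of an environment. -/
def extend (Γ : Cx) (x : ℕ) (A : Ty) : Cx := fun y => if y = x then some A else Γ y

/-! ## The λμ-calculus (named variables) -/

mutual
  /-- λμ-terms `t ::= x | λx.t | t t | μα.c`. -/
  inductive Tm : Type
    | var : ℕ → Tm
    | abs : ℕ → Tm → Tm
    | app : Tm → Tm → Tm
    | mabs : ℕ → Cm → Tm
  /-- λμ-commands `c ::= [α]t`. -/
  inductive Cm : Type
    | cmd : ℕ → Tm → Cm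
end

/-- λμ-contexts `e ::= ⟨α⟩ | ⟨β⟩(t ·) | e · t`. -/
inductive Ct : Type
  | cvar : ℕ → Ct
  | push : ℕ → Tm → Ct
  | cons : Ct → Tm → Ct

/-- Filling a λμ-context with a term: `⟨α⟩⟨t⟩ = [α]t`,
`(⟨β⟩(u ·))⟨t⟩ = [β](u t)`, `(h · u)⟨t⟩ = h⟨t u⟩`. -/
def fill : Ct → Tm → Cm
  | .cvar a, t => .cmd a t
  | .push b u, t => .cmd b (.app u t)
  | .cons h u, t => fill h (.app t u)

/-! ### The simple type system of λμ.
`TT Γ t A Δ` is the judgment `Γ ⊢ t : A | Δ`, `TC c Γ Δ` is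
`c : (Γ ⊢ Δ)` and `TE Γ e A Δ` is `Γ | e : A ⊢ Δ`. -/

mutual
  inductive TT : Cx → Tm → Ty → Cx → Prop
    | var (x : ℕ) (A : Ty) : TT (single x A) (.var x) A emp
    | abs {Γ : Cx} {t : Tm} {B : Ty} {Δ : Cx} {x : ℕ} {A : Ty} :
        TT Γ t B Δ → (Γ x = some A ∨ Γ x = none) →
        TT (remove Γ x) (.abs x t) (.arr A B) Δ
    | app {Γ Γ' : Cx} {u v : Tm} {A B : Ty} {Δ Δ' : Cx} :
        TT Γ u (.arr A B) Δ → TT Γ' v A Δ' → Compat Γ Γ' → Compat Δ Δ' →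
        TT (union Γ Γ') (.app u v) B (union Δ Δ')
    | mabs {c : Cm} {Γ Δ : Cx} {a : ℕ} {A : Ty} :
        TC c Γ Δ → (Δ a = some A ∨ Δ a = none) →
        TT Γ (.mabs a c) A (remove Δ a)
  inductive TC : Cm → Cx → Cx → Prop
    | cmd {Γ : Cx} {t : Tm} {A : Ty} {Δ : Cx} {a : ℕ} :
        TT Γ t A Δ → (Δ a = some A ∨ Δ a = none) →
        TC (.cmd a t) Γ (extend Δ a A)
end

inductive TE : Cx → Ct → Ty → Cx → Prop
  | cvar (a : ℕ) (A : Ty) : TE emp (.cvar a) A (single a A)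
  | push {Γ : Cx} {t : Tm} {A B : Ty} {Δ : Cx} {b : ℕ} :
      TT Γ t (.arr A B) Δ → (Δ b = some B ∨ Δ b = none) →
      TE Γ (.push b t) A (extend Δ b B)
  | cons {Γ Γ' : Cx} {t : Tm} {e : Ct} {A B : Ty} {Δ Δ' : Cx} :
      TT Γ t A Δ → TE Γ' e B Δ' → Compat Γ Γ' → Compat Δ Δ' →
      TE (union Γ Γ') (.cons e t) (.arr A B) (union Δ Δ')

/-! ## The λ̄μμ̃-calculus (named variables) -/

mutual
  /-- λ̄μμ̃-terms `t ::= x | λx.t | μα.c`. -/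
  inductive BTm : Type
    | var : ℕ → BTm
    | abs : ℕ → BTm → BTm
    | mabs : ℕ → BCm → BTm
  /-- λ̄μμ̃-commands `c ::= ⟨t | e⟩`. -/
  inductive BCm : Type
    | cut : BTm → BCt → BCm
  /-- λ̄μμ̃-contexts `e ::= α | t · e | μ̃x.c`. -/
  inductive BCt : Type
    | cvar : ℕ → BCt
    | cons : BTm → BCt → BCt
    | tmu : ℕ → BCm → BCt
end

/-! ### The simple type system of λ̄μμ̃.
`BT Γ t A Δ` is `Γ ⊢ t : A | Δ`, `BC c Γ Δ` is `c : (Γ ⊢ Δ)` and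
`BE Γ e A Δ` is `Γ | e : A ⊢ Δ`. -/

mutual
  inductive BT : Cx → BTm → Ty → Cx → Prop
    | var (x : ℕ) (A : Ty) : BT (single x A) (.var x) A emp
    | abs {Γ : Cx} {t : BTm} {B : Ty} {Δ : Cx} {x : ℕ} {A : Ty} :
        BT Γ t B Δ → (Γ x = some A ∨ Γ x = none) →
        BT (remove Γ x) (.abs x t) (.arr A B) Δ
    | mabs {c : BCm} {Γ Δ : Cx} {a : ℕ} {A : Ty} :
        BC c Γ Δ → (Δ a = some A ∨ Δ a = none) →
        BT Γ (.mabs a c) A (remove Δ a)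
  inductive BC : BCm → Cx → Cx → Prop
    | cut {Γ Γ' : Cx} {t : BTm} {e : BCt} {A : Ty} {Δ Δ' : Cx} :
        BT Γ t A Δ → BE Γ' e A Δ' → Compat Γ Γ' → Compat Δ Δ' →
        BC (.cut t e) (union Γ Γ') (union Δ Δ')
  inductive BE : Cx → BCt → Ty → Cx → Prop
    | cvar (a : ℕ) (A : Ty) : BE emp (.cvar a) A (single a A)
    | cons {Γ Γ' : Cx} {t : BTm} {e : BCt} {A B : Ty} {Δ Δ' : Cx} :
        BT Γ t A Δ → BE Γ' e B Δ' → Compat Γ Γ' → Compat Δ Δ' →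
        BE (union Γ Γ') (.cons t e) (.arr A B) (union Δ Δ')
    | tmu {c : BCm} {Γ Δ : Cx} {x : ℕ} {A : Ty} :
        BC c Γ Δ → (Γ x = some A ∨ Γ x = none) →
        BE (remove Γ x) (.tmu x c) A Δ
end

/-! ### Fresh names for the translation `(·)†` -/

mutual
  /-- A strict upper bound on the λ-variable names occurring in a λ̄μμ̃-term. -/
  def fvLT : BTm → ℕ
    | .var x => x + 1
    | .abs x t => max (x + 1) (fvLT t)
    | .mabs _ c => fvLC c
  def fvLC : BCm → ℕ
    | .cut t e => max (fvLT t) (fvLE e)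
  def fvLE : BCt → ℕ
    | .cvar _ => 0
    | .cons t e => max (fvLT t) (fvLE e)
    | .tmu x c => max (x + 1) (fvLC c)
end

mutual
  /-- A strict upper bound on the μ-variable names occurring in a λ̄μμ̃-term. -/
  def fvMT : BTm → ℕ
    | .var _ => 0
    | .abs _ t => fvMT t
    | .mabs a c => max (a + 1) (fvMC c)
  def fvMC : BCm → ℕ
    | .cut t e => max (fvMT t) (fvME e)
  def fvME : BCt → ℕ
    | .cvar a => a + 1
    | .cons t e => max (fvMT t) (fvME e)
    | .tmu _ c => fvMC c
end

/-! ### The translation `(·)†` from λμ to λ̄μμ̃ -/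

mutual
  /-- `x† = x`, `(λx.u)† = λx.u†`, `(u v)† = μβ.⟨v† | μ̃y.⟨u† | y·β⟩⟩`
  (`y`, `β` fresh), `(μα.c)† = μα.c†`. -/
  def dagT : Tm → BTm
    | .var x => .var x
    | .abs x t => .abs x (dagT t)
    | .app u v =>
        let U := dagT u
        let V := dagT v
        let y := max (fvLT U) (fvLT V)
        let b := max (fvMT U) (fvMT V)
        .mabs b (.cut V (.tmu y (.cut U (.cons (.var y) (.cvar b)))))
    | .mabs a c => .mabs a (dagC c)
  /-- `([α]t)† = ⟨t† | α⟩`. -/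
  def dagC : Cm → BCm
    | .cmd a t => .cut (dagT t) (.cvar a)
end

/-- `⟨α⟩† = α`, `(⟨β⟩(t ·))† = μ̃y.⟨t† | y·β⟩` (`y` fresh), `(h · t)† = t† · h†`. -/
def dagE : Ct → BCt
  | .cvar a => .cvar a
  | .push b t =>
      let T := dagT t
      .tmu (fvLT T) (.cut T (.cons (.var (fvLT T)) (.cvar b)))
  | .cons e t => .cons (dagT t) (dagE e)

theorem union_eq_none {Γ Γ' : Cx} {x : ℕ} (h : Γ x = none) (h' : Γ' x = none) :
    union Γ Γ' x = none := by
  simp [union, h, h']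

theorem Compat.symm {Γ Γ' : Cx} (h : Compat Γ Γ') : Compat Γ' Γ :=
  fun x A B hA hB => (h x B A hB hA).symm

theorem union_comm {Γ Γ' : Cx} (h : Compat Γ Γ') : union Γ Γ' = union Γ' Γ := by
  funext x
  have hx := h x
  cases hΓ : Γ x <;> cases hΓ' : Γ' x <;> simp_all [union]

theorem union_emp (Γ : Cx) : union Γ emp = Γ := by
  funext x
  cases h : Γ x <;> simp [union, emp, h]

theorem emp_union (Γ : Cx) : union emp Γ = Γ := rfl

theorem compat_emp (Γ : Cx) : Compat Γ emp := by
  intro x A B _ h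
  simp [emp] at h

theorem emp_compat (Γ : Cx) : Compat emp Γ := (compat_emp Γ).symm

theorem compat_single {Γ : Cx} {x : ℕ} {A : Ty} (h : Γ x = some A ∨ Γ x = none) :
    Compat Γ (single x A) := by
  intro y B C hB hC
  unfold single at hC
  split at hC <;> simp_all

theorem union_single {Γ : Cx} {x : ℕ} {A : Ty} (h : Γ x = some A ∨ Γ x = none) :
    union Γ (single x A) = extend Γ x A := by
  funext y
  by_cases hy : y = x
  · subst hy
    rcases h with h | h <;> simp [union, single, extend, h]
  · cases hΓ : Γ y <;> simp [union, single, extend, hy, hΓ]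

theorem extend_self (Γ : Cx) (x : ℕ) (A : Ty) : extend Γ x A x = some A := by
  simp [extend]

theorem remove_extend {Γ : Cx} {x : ℕ} {A : Ty} (h : Γ x = none) :
    remove (extend Γ x A) x = Γ := by
  funext y
  by_cases hy : y = x <;> simp [remove, extend, hy, h]

theorem union_extend {Γ Γ' : Cx} {x : ℕ} {A : Ty} (h : Γ x = none) :
    union Γ (extend Γ' x A) = extend (union Γ Γ') x A := by
  funext y
  by_cases hy : y = x <;> simp [union, extend, hy, h]

theorem Compat.extend_right {Γ Γ' : Cx} {x : ℕ} {A : Ty} (h : Compat Γ Γ') (hx : Γ x = none) :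
    Compat Γ (extend Γ' x A) := by
  intro y B C hB hC
  by_cases hy : y = x
  · simp [← hy, hB] at hx
  · exact h y B C hB (by simpa [extend, hy] using hC)

mutual
  theorem BT.eq_none {Γ Δ : Cx} {t : BTm} {A : Ty} : BT Γ t A Δ →
      (∀ x, fvLT t ≤ x → Γ x = none) ∧ (∀ a, fvMT t ≤ a → Δ a = none)
    | .var x A => by
        refine ⟨fun y hy => ?_, fun _ _ => rfl⟩
        simp only [fvLT] at hy
        simp [single, show y ≠ x by omega]
    | .abs h _ => by
        obtain ⟨hΓ, hΔ⟩ := h.eq_none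
        refine ⟨fun y hy => ?_, fun a ha => hΔ a (by simpa [fvMT] using ha)⟩
        simp only [fvLT] at hy
        simp [remove, hΓ y (by omega)]
    | .mabs h _ => by
        obtain ⟨hΓ, hΔ⟩ := h.eq_none
        refine ⟨fun y hy => hΓ y (by simpa [fvLT] using hy), fun a ha => ?_⟩
        simp only [fvMT] at ha
        simp [remove, hΔ a (by omega)]
  theorem BC.eq_none {Γ Δ : Cx} {c : BCm} : BC c Γ Δ →
      (∀ x, fvLC c ≤ x → Γ x = none) ∧ (∀ a, fvMC c ≤ a → Δ a = none)
    | .cut h h' _ _ => by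
        obtain ⟨hΓ, hΔ⟩ := h.eq_none
        obtain ⟨hΓ', hΔ'⟩ := h'.eq_none
        refine ⟨fun y hy => ?_, fun a ha => ?_⟩
        · simp only [fvLC] at hy
          exact union_eq_none (hΓ y (by omega)) (hΓ' y (by omega))
        · simp only [fvMC] at ha
          exact union_eq_none (hΔ a (by omega)) (hΔ' a (by omega))
  theorem BE.eq_none {Γ Δ : Cx} {e : BCt} {A : Ty} : BE Γ e A Δ →
      (∀ x, fvLE e ≤ x → Γ x = none) ∧ (∀ a, fvME e ≤ a → Δ a = none)
    | .cvar a A => by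
        refine ⟨fun _ _ => rfl, fun y hy => ?_⟩
        simp only [fvME] at hy
        simp [single, show y ≠ a by omega]
    | .cons h h' _ _ => by
        obtain ⟨hΓ, hΔ⟩ := h.eq_none
        obtain ⟨hΓ', hΔ'⟩ := h'.eq_none
        refine ⟨fun y hy => ?_, fun a ha => ?_⟩
        · simp only [fvLE] at hy
          exact union_eq_none (hΓ y (by omega)) (hΓ' y (by omega))
        · simp only [fvME] at ha
          exact union_eq_none (hΔ a (by omega)) (hΔ' a (by omega))
    | .tmu h _ => by
        obtain ⟨hΓ, hΔ⟩ := h.eq_none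
        refine ⟨fun y hy => ?_, fun a ha => hΔ a (by simpa [fvME] using ha)⟩
        simp only [fvLE] at hy
        simp [remove, hΓ y (by omega)]
end

/-- Typing of the context `μ̃y.⟨t | y · β⟩` for fresh `y`. -/
theorem BE.push {Γ Δ : Cx} {t : BTm} {A B : Ty} {y b : ℕ} (h : BT Γ t (.arr A B) Δ)
    (hy : Γ y = none) (hb : Δ b = some B ∨ Δ b = none) :
    BE Γ (.tmu y (.cut t (.cons (.var y) (.cvar b)))) A (extend Δ b B) := by
  have hstack : BE (single y A) (.cons (.var y) (.cvar b)) (.arr A B) (single b B) := by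
    simpa only [union_emp, emp_union] using
      BE.cons (.var y A) (.cvar b B) (compat_emp _) (emp_compat _)
  have hcut := BC.cut h hstack (compat_single (.inr hy)) (compat_single hb)
  rw [union_single (.inr hy), union_single hb] at hcut
  simpa only [remove_extend hy] using BE.tmu hcut (.inl (extend_self Γ y A))

/-- Typing of the term `μβ.⟨v | μ̃y.⟨u | y · β⟩⟩` for fresh `y` and `β`. -/
theorem BT.app {Γ Γ' Δ Δ' : Cx} {u v : BTm} {A B : Ty} {y b : ℕ}
    (hu : BT Γ u (.arr A B) Δ) (hv : BT Γ' v A Δ') (hΓ : Compat Γ Γ') (hΔ : Compat Δ Δ')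
    (hy : Γ y = none) (hb : Δ b = none) (hb' : Δ' b = none) :
    BT (union Γ Γ') (.mabs b (.cut v (.tmu y (.cut u (.cons (.var y) (.cvar b)))))) B
      (union Δ Δ') := by
  have hcut := BC.cut hv (BE.push hu hy (.inr hb)) hΓ.symm (hΔ.symm.extend_right hb')
  rw [union_extend hb', ← union_comm hΓ, ← union_comm hΔ] at hcut
  simpa only [remove_extend (union_eq_none hb hb')] using
    BT.mabs hcut (.inl (extend_self (union Δ Δ') b B))

mutual
  theorem TT.dag {Γ Δ : Cx} {t : Tm} {A : Ty} : TT Γ t A Δ → BT Γ (dagT t) A Δ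
    | .var x A => by
        rw [dagT]
        exact .var x A
    | .abs h hx => by
        rw [dagT]
        exact .abs h.dag hx
    | .app hu hv hΓ hΔ => by
        rw [dagT]
        obtain ⟨hu₁, hu₂⟩ := hu.dag.eq_none
        exact BT.app hu.dag hv.dag hΓ hΔ (hu₁ _ (le_max_left _ _)) (hu₂ _ (le_max_left _ _))
          (hv.dag.eq_none.2 _ (le_max_right _ _))
    | .mabs h ha => by
        rw [dagT]
        exact .mabs h.dag ha
  theorem TC.dag {Γ Δ : Cx} {c : Cm} : TC c Γ Δ → BC (dagC c) Γ Δ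
    | .cmd h ha => by
        rw [dagC, ← union_single ha]
        simpa only [union_emp] using
          BC.cut h.dag (.cvar _ _) (compat_emp _) (compat_single ha)
end

theorem TE.dag {Γ Δ : Cx} {e : Ct} {A : Ty} (h : TE Γ e A Δ) : BE Γ (dagE e) A Δ := by
  induction h with
  | cvar a A => exact .cvar a A
  | push h hb => exact BE.push h.dag (h.dag.eq_none.1 _ le_rfl) hb
  | cons h _ hΓ hΔ ih => exact .cons h.dag ih hΓ hΔ

/-- the translation `(·)†` preserves simple typing:
each derivable λμ judgment for `t`, `c` or `e` gives the corresponding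
derivable λ̄μμ̃ judgment for `t†`, `c†` or `e†`. -/
theorem dag_type_compatible :
    (∀ (Γ : Cx) (t : Tm) (A : Ty) (Δ : Cx), TT Γ t A Δ → BT Γ (dagT t) A Δ) ∧
    (∀ (c : Cm) (Γ Δ : Cx), TC c Γ Δ → BC (dagC c) Γ Δ) ∧
    (∀ (Γ : Cx) (e : Ct) (A : Ty) (Δ : Cx), TE Γ e A Δ → BE Γ (dagE e) A Δ) := by
  exact ⟨fun _ _ _ _ h => h.dag, fun _ _ _ h => h.dag, fun _ _ _ _ h => h.dag⟩

end CHTyping
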